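/- arXiv:2401.13585 — 3 statements merged into one kernel-verified Lean document; each statement's English description precedes it below -/
import Mathlib

section
/- Let Γ¹,…,Γᵐ be finitely many admissible sets of invertible n×n real matrices. Consider any sequence (y_κ) in ℝⁿ defined by y_{κ+1} = Λ_κ y_κ, where at each step κ an index j_κ ∈ {1,…,m} is chosen arbitrarily and Λ_κ is chosen as a minimizer of yᵀ_κ M_Λ y_κ over Λ ∈ Γ^{j_κ}. Then y_κ → 0 as κ → ∞. -/
open Matrix Set Filter Topology Pointwise

noncomputable section

/-- The quadratic form `xᵀ M x`. -/
def quadForm {n : ℕ} (M : Matrix (Fin n) (Fin n) ℝ) (x : Fin n → ℝ) : ℝ :=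
  x ⬝ᵥ M.mulVec x

/-- The ellipsoid `{x : xᵀ M x ≤ 1}`. -/
def ellipsoid {n : ℕ} (M : Matrix (Fin n) (Fin n) ℝ) : Set (Fin n → ℝ) :=
  {x | quadForm M x ≤ 1}

/-- `S*_Γ = ⋃_{Λ ∈ Γ} S_Λ` where `S_Λ = {x : xᵀ (ΛᵀM₀Λ) x ≤ 1}`. -/
def SStar {n : ℕ} (M₀ : Matrix (Fin n) (Fin n) ℝ)
    (Γ : Finset (Matrix (Fin n) (Fin n) ℝ)) : Set (Fin n → ℝ) :=
  ⋃ Λ ∈ Γ, ellipsoid (Λᵀ * M₀ * Λ)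
theorem quadForm_smul' {n : ℕ} (M : Matrix (Fin n) (Fin n) ℝ) (t : ℝ) (x : Fin n → ℝ) :
    quadForm M (t • x) = t ^ 2 * quadForm M x := by
  simp only [quadForm, Matrix.mulVec_smul, dotProduct_smul, smul_dotProduct, smul_eq_mul]
  ring

theorem quadForm_conj {n : ℕ} (M L : Matrix (Fin n) (Fin n) ℝ) (x : Fin n → ℝ) :
    quadForm (Lᵀ * M * L) x = quadForm M (L.mulVec x) := by
  simp only [quadForm, ← Matrix.mulVec_mulVec]
  rw [Matrix.dotProduct_mulVec, Matrix.vecMul_transpose]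

theorem continuous_quadForm {n : ℕ} (M : Matrix (Fin n) (Fin n) ℝ) :
    Continuous (quadForm M) := by
  unfold quadForm
  exact continuous_id.dotProduct (continuous_const.matrix_mulVec continuous_id)

theorem quadForm_pos {n : ℕ} {M : Matrix (Fin n) (Fin n) ℝ} (hM : M.PosDef)
    {x : Fin n → ℝ} (hx : x ≠ 0) : 0 < quadForm M x := by
  simpa [quadForm] using hM.dotProduct_mulVec_pos hx

theorem quadForm_coercive {n : ℕ} {M : Matrix (Fin n) (Fin n) ℝ} (hM : M.PosDef) :
    ∃ c : ℝ, 0 < c ∧ ∀ x, c * ‖x‖ ^ 2 ≤ quadForm M x := by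
  obtain ⟨c, hc, h⟩ := (isCompact_sphere (0 : Fin n → ℝ) 1).exists_forall_le'
    (continuous_quadForm M).continuousOn (a := 0) (fun b hb => quadForm_pos hM (by
      rintro rfl
      simp at hb))
  refine ⟨c, hc, fun x => ?_⟩
  by_cases hx : x = 0
  · subst hx
    simp [quadForm]
  have hx' : 0 < ‖x‖ := norm_pos_iff.2 hx
  have h1 := h (‖x‖⁻¹ • x) (by simp [norm_smul, hx'.ne'])
  rw [quadForm_smul', inv_pow, inv_mul_eq_div, le_div_iff₀ (by positivity)] at h1
  exact h1

theorem isCompact_ellipsoid {n : ℕ} {M : Matrix (Fin n) (Fin n) ℝ} (hM : M.PosDef) :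
    IsCompact (ellipsoid M) := by
  obtain ⟨c, hc, h⟩ := quadForm_coercive hM
  refine Metric.isCompact_of_isClosed_isBounded
    (isClosed_le (continuous_quadForm M) continuous_const) ?_
  refine (Metric.isBounded_closedBall (x := (0 : Fin n → ℝ)) (r := √(1 / c))).subset ?_
  intro x hx
  have hx1 : quadForm M x ≤ 1 := hx
  rw [mem_closedBall_zero_iff]
  apply Real.le_sqrt_of_sq_le
  rw [le_div_iff₀ hc]
  linarith [h x]

/-- with admissible sets Γ¹,…,Γᵐ, any sequence generated by
choosing at each step an arbitrary admissible set and a minimizing matrix from it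
converges to zero. -/
theorem stmt1 {n : ℕ} (hn : 0 < n)
    (M₀ : Matrix (Fin n) (Fin n) ℝ) (hM₀ : M₀.PosDef)
    (m : ℕ) (hm : 0 < m)
    (Γ : Fin m → Finset (Matrix (Fin n) (Fin n) ℝ))
    (hne : ∀ i, (Γ i).Nonempty)
    (hinv : ∀ i, ∀ Λ ∈ Γ i, IsUnit Λ.det)
    (hadm : ∀ i, ellipsoid M₀ ⊆ interior (SStar M₀ (Γ i)))
    (y : ℕ → Fin n → ℝ) (j : ℕ → Fin m) (A : ℕ → Matrix (Fin n) (Fin n) ℝ)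
    (hA : ∀ κ, A κ ∈ Γ (j κ))
    (hmin : ∀ κ, ∀ Λ ∈ Γ (j κ),
      quadForm ((A κ)ᵀ * M₀ * A κ) (y κ) ≤ quadForm (Λᵀ * M₀ * Λ) (y κ))
    (hstep : ∀ κ, y (κ + 1) = (A κ).mulVec (y κ)) :
    Tendsto y atTop (nhds 0) := by
  obtain ⟨c, hc, hcoer⟩ := quadForm_coercive hM₀
  have hev : ∀ᶠ t in 𝓝 (1 : ℝ), ∀ x ∈ ellipsoid M₀, ∀ i, t • x ∈ interior (SStar M₀ (Γ i)) := by
    apply (isCompact_ellipsoid hM₀).eventually_forall_of_forall_eventually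
    intro x hx
    rw [eventually_all]
    intro i
    have hcont : Continuous (fun z : ℝ × (Fin n → ℝ) => z.1 • z.2) := by fun_prop
    apply hcont.continuousAt.eventually_mem
    apply isOpen_interior.mem_nhds
    simpa using hadm i hx
  obtain ⟨ρ, hρ1, hρ⟩ : ∃ ρ : ℝ, 1 < ρ ∧
      ∀ x ∈ ellipsoid M₀, ∀ i, ρ • x ∈ interior (SStar M₀ (Γ i)) := by
    have h1 : ∀ᶠ t in 𝓝[>] (1 : ℝ), ∀ x ∈ ellipsoid M₀, ∀ i,
      t • x ∈ interior (SStar M₀ (Γ i)) := hev.filter_mono nhdsWithin_le_nhds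
    obtain ⟨t, ht, ht'⟩ := (h1.and self_mem_nhdsWithin).exists
    exact ⟨t, ht', ht⟩
  have hρ0 : 0 < ρ := by linarith
  have hdec : ∀ κ, quadForm M₀ (y (κ + 1)) ≤ (ρ ^ 2)⁻¹ * quadForm M₀ (y κ) := by
    intro κ
    by_cases hy : y κ = 0
    · rw [hstep, hy]
      simp [quadForm]
    have hV := quadForm_pos hM₀ hy
    set V := quadForm M₀ (y κ) with hVdef
    have hsq : (√V)⁻¹ ^ 2 = V⁻¹ := by rw [inv_pow, Real.sq_sqrt hV.le]
    have hmem : (√V)⁻¹ • y κ ∈ ellipsoid M₀ := by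
      change quadForm M₀ _ ≤ 1
      rw [quadForm_smul', hsq, ← hVdef, inv_mul_cancel₀ hV.ne']
    have h2 := interior_subset (hρ _ hmem (j κ))
    simp only [SStar, mem_iUnion] at h2
    obtain ⟨Λ, hΛ, h3⟩ := h2
    have h4 : quadForm (Λᵀ * M₀ * Λ) (ρ • (√V)⁻¹ • y κ) ≤ 1 := h3
    rw [quadForm_smul', quadForm_smul', hsq] at h4
    have h5 := hmin κ Λ hΛ
    rw [quadForm_conj, ← hstep] at h5
    refine h5.trans ?_
    rw [inv_mul_eq_div, le_div_iff₀ (by positivity)]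
    rw [← mul_assoc, mul_comm (ρ ^ 2), mul_assoc, inv_mul_le_iff₀ hV] at h4
    linarith
  have hgeo : ∀ κ, quadForm M₀ (y κ) ≤ ((ρ ^ 2)⁻¹) ^ κ * quadForm M₀ (y 0) := by
    intro κ
    induction κ with
    | zero => simp
    | succ k ih =>
      refine (hdec k).trans ?_
      rw [pow_succ' (ρ ^ 2)⁻¹ k, mul_assoc]
      gcongr
  have hlim : Tendsto (fun κ => ((ρ ^ 2)⁻¹) ^ κ * quadForm M₀ (y 0) / c) atTop (𝓝 0) := by
    have := ((tendsto_pow_atTop_nhds_zero_of_lt_one (r := (ρ ^ 2)⁻¹) (by positivity)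
      (inv_lt_one_of_one_lt₀ (by nlinarith))).mul_const (quadForm M₀ (y 0))).div_const c
    simpa using this
  have hsqn : Tendsto (fun κ => ‖y κ‖ ^ 2) atTop (𝓝 0) := by
    refine squeeze_zero (fun _ => by positivity) (fun κ => ?_) hlim
    rw [le_div_iff₀ hc]
    linarith [hcoer (y κ), hgeo κ]
  rw [tendsto_zero_iff_norm_tendsto_zero]
  have := hsqn.sqrt
  simpa using this
end
end

section
/- Let {M_γ}_{γ∈Γ'} be a finite nonempty family of symmetric n×n real matrices, let M₀ be symmetric positive definite, and set G(λ) := M₀ + Σ_{γ∈Γ'} λ_γ M_γ for λ ∈ ℝ^{Γ'}. Suppose λ* is a local maximum of λ ↦ −Σ_{γ∈Γ'} λ_γ on the set {λ : det G(λ) = 0}, and the gradient of λ ↦ det G(λ) at λ* — whose γ-component equals tr(G(λ*)† M_γ) by Jacobi's formula, where G† denotes the adjugate matrix — is nonzero. Then tr(G(λ*)†(M_γ − M_ν)) = 0 for all γ, ν ∈ Γ'. -/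
open Matrix Set Filter Topology Pointwise

noncomputable section

/-- `G(λ) = M₀ + Σ_γ λ_γ M_γ`. -/
def Gmat {n : ℕ} {ι : Type} [Fintype ι] (M₀ : Matrix (Fin n) (Fin n) ℝ)
    (M : ι → Matrix (Fin n) (Fin n) ℝ) (lam : ι → ℝ) : Matrix (Fin n) (Fin n) ℝ :=
  M₀ + ∑ γ, lam γ • M γ

/-- Row expansion of the trace pairing with the adjugate. -/
theorem sum_det_updateRow_eq_trace {n : ℕ} (A B : Matrix (Fin n) (Fin n) ℝ) :
    ∑ i, (A.updateRow i (B i)).det = (A.adjugate * B).trace := by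
  have h : ∀ i, (A.updateRow i (B i)).det = ∑ j, A.adjugate j i * B i j := by
    intro i
    rw [← Matrix.cramer_transpose_apply, Matrix.cramer_eq_adjugate_mulVec,
      ← Matrix.adjugate_transpose]
    simp [Matrix.mulVec, dotProduct]
  simp only [h, Matrix.trace, Matrix.diag, Matrix.mul_apply]
  exact Finset.sum_comm

/-- The determinant as a continuous multilinear map of the rows. -/
def detCMM (n : ℕ) : ContinuousMultilinearMap ℝ (fun _ : Fin n => Fin n → ℝ) ℝ where
  toMultilinearMap := (Matrix.detRowAlternating (R := ℝ) (n := Fin n)).toMultilinearMap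
  cont := by
    change Continuous fun A : Matrix (Fin n) (Fin n) ℝ => A.det
    exact continuous_id.matrix_det

/-- Jacobi's formula along the affine family `Gmat`. -/
theorem exists_hasStrictFDerivAt_det_Gmat {n : ℕ} {ι : Type} [Fintype ι]
    (M₀ : Matrix (Fin n) (Fin n) ℝ) (M : ι → Matrix (Fin n) (Fin n) ℝ) (lam : ι → ℝ) :
    ∃ f' : (ι → ℝ) →L[ℝ] ℝ, HasStrictFDerivAt (fun l => (Gmat M₀ M l).det) f' lam ∧
      ∀ v, f' v = ((Gmat M₀ M lam).adjugate * ∑ γ, v γ • M γ).trace := by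
  let L : (ι → ℝ) →ₗ[ℝ] (Fin n → Fin n → ℝ) :=
    { toFun := fun v i j => ∑ γ, v γ * M γ i j
      map_add' := by
        intro v w; ext i j
        simp [add_mul, Finset.sum_add_distrib]
      map_smul' := by
        intro c v; ext i j
        simp [mul_assoc, Finset.mul_sum] }
  let g : (ι → ℝ) → (Fin n → Fin n → ℝ) := fun l => (fun i j => M₀ i j) + L.toContinuousLinearMap l
  have hLM : ∀ v, (L v : Fin n → Fin n → ℝ) = (∑ γ, v γ • M γ : Matrix (Fin n) (Fin n) ℝ) := by
    intro v
    ext i j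
    simp [L, Matrix.sum_apply]
  have hg : ∀ l, g l = Gmat M₀ M l := by
    intro l
    have := hLM l
    change (fun i j => M₀ i j) + L l = _
    rw [this]; rfl
  have h1 : HasStrictFDerivAt g L.toContinuousLinearMap lam :=
    (L.toContinuousLinearMap.hasStrictFDerivAt).const_add _
  have h2 := ((detCMM n).hasStrictFDerivAt (g lam)).comp lam h1
  refine ⟨_, HasStrictFDerivAt.congr_of_eventuallyEq h2 (Eventually.of_forall fun l => ?_), ?_⟩
  · change Matrix.det (g l) = _
    rw [hg]
  · intro v
    rw [← sum_det_updateRow_eq_trace, ← hLM, ← hg]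
    rw [ContinuousLinearMap.comp_apply, ContinuousMultilinearMap.linearDeriv_apply]
    rfl

/-- if `λ*` is a local maximum of `λ ↦ −Σ λ_γ` on `{λ : det G(λ) = 0}`
and the gradient `(tr(G(λ*)† M_γ))_γ` of `det G` at `λ*` is nonzero, then the trace
equations `tr(G(λ*)†(M_γ − M_ν)) = 0` hold for all `γ, ν`. -/
theorem stmt3 {n : ℕ} {ι : Type} [Fintype ι] [Nonempty ι]
    (M₀ : Matrix (Fin n) (Fin n) ℝ) (hM₀ : M₀.PosDef)
    (M : ι → Matrix (Fin n) (Fin n) ℝ) (hM : ∀ γ, (M γ).IsSymm)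
    (lam : ι → ℝ)
    (hmax : IsLocalMaxOn (fun l : ι → ℝ => -∑ γ, l γ)
      {l : ι → ℝ | (Gmat M₀ M l).det = 0} lam)
    (hconstr : (Gmat M₀ M lam).det = 0)
    (hgrad : (fun γ : ι => ((Gmat M₀ M lam).adjugate * M γ).trace) ≠ 0) :
    ∀ γ ν : ι, ((Gmat M₀ M lam).adjugate * (M γ - M ν)).trace = 0 := by
  classical
  obtain ⟨f', hf', hv⟩ := exists_hasStrictFDerivAt_det_Gmat M₀ M lam
  let φ' : (ι → ℝ) →L[ℝ] ℝ := -∑ γ, ContinuousLinearMap.proj (R := ℝ) (φ := fun _ : ι => ℝ) γ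
  have hφ : HasStrictFDerivAt (fun l : ι → ℝ => -∑ γ, l γ) φ' lam := by
    convert φ'.hasStrictFDerivAt (x := lam) using 1
    funext l
    simp [φ']
  have hext : IsLocalExtrOn (fun l : ι → ℝ => -∑ γ, l γ)
      {l | (Gmat M₀ M l).det = (Gmat M₀ M lam).det} lam := by
    rw [hconstr]
    exact Or.inr hmax
  obtain ⟨a, b, hab, h⟩ := hext.exists_multipliers_of_hasStrictFDerivAt_1d hf' hφ
  have key : ∀ γ, a * ((Gmat M₀ M lam).adjugate * M γ).trace = b := by
    intro γ
    have h3 := DFunLike.congr_fun h (Pi.single γ (1 : ℝ))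
    have h4 := hv (Pi.single γ (1 : ℝ))
    simp only [Pi.single_apply, ite_smul, one_smul, zero_smul, Finset.sum_ite_eq',
      Finset.mem_univ, if_true] at h4
    have h5 : φ' (Pi.single γ (1 : ℝ)) = -1 := by
      simp [φ', Pi.single_apply]
    simp only [_root_.add_apply, _root_.smul_apply, smul_eq_mul,
      h4, h5, _root_.zero_apply] at h3
    linarith
  have ha : a ≠ 0 := by
    rintro rfl
    obtain ⟨γ⟩ := ‹Nonempty ι›
    apply hab
    have := key γ
    simp at this
    simp [← this]
  intro γ ν
  rw [Matrix.mul_sub, Matrix.trace_sub]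
  have := (key γ).trans (key ν).symm
  rw [mul_left_cancel₀ ha this, sub_self]
end
end

section
/- Let Γ be an admissible finite nonempty set of invertible n×n real matrices, let x₀ ∈ ℝⁿ with x₀ ≠ 0, and let Λ* ∈ Γ be a minimizer of x₀ᵀM_Λx₀ over Λ ∈ Γ. Then Ψ(Λ* x₀; S*_Γ) < Ψ(x₀; S*_Γ), where Ψ denotes the gauge (Minkowski functional). -/
open Matrix Set Filter Topology Pointwise

noncomputable section

/-- The gauge (Minkowski functional) `Ψ(x;S) = inf {α : α ≥ 0 ∧ x ∈ α • S}`. -/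
def gaugeFn {n : ℕ} (S : Set (Fin n → ℝ)) (x : Fin n → ℝ) : ℝ :=
  sInf {α : ℝ | 0 ≤ α ∧ x ∈ α • S}

theorem quadForm_smul_aux {n : ℕ} (M : Matrix (Fin n) (Fin n) ℝ) (c : ℝ) (x : Fin n → ℝ) :
    quadForm M (c • x) = c ^ 2 * quadForm M x := by
  simp only [quadForm, Matrix.mulVec_smul, dotProduct_smul, smul_dotProduct, smul_eq_mul]
  ring

theorem quadForm_conj_aux {n : ℕ} (M A : Matrix (Fin n) (Fin n) ℝ) (x : Fin n → ℝ) :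
    quadForm (Aᵀ * M * A) x = quadForm M (A.mulVec x) := by
  simp only [quadForm]
  rw [← Matrix.mulVec_mulVec, ← Matrix.mulVec_mulVec, Matrix.dotProduct_mulVec,
    Matrix.vecMul_transpose]

/-- Lemma C.2, item 1: if Γ is admissible, x₀ ≠ 0 and Λ* minimizes
x₀ᵀM_Λx₀ over Λ ∈ Γ, then Ψ(Λ*x₀; S*_Γ) < Ψ(x₀; S*_Γ). -/
theorem stmt8 {n : ℕ} (hn : 0 < n)
    (M₀ : Matrix (Fin n) (Fin n) ℝ) (hM₀ : M₀.PosDef)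
    (Γ : Finset (Matrix (Fin n) (Fin n) ℝ)) (hΓ : Γ.Nonempty)
    (hinv : ∀ Λ ∈ Γ, IsUnit Λ.det)
    (hadm : ellipsoid M₀ ⊆ interior (SStar M₀ Γ))
    (x₀ : Fin n → ℝ) (hx₀ : x₀ ≠ 0)
    (Λs : Matrix (Fin n) (Fin n) ℝ) (hΛs : Λs ∈ Γ)
    (hmin : ∀ Λ ∈ Γ, quadForm (Λsᵀ * M₀ * Λs) x₀ ≤ quadForm (Λᵀ * M₀ * Λ) x₀) :
    gaugeFn (SStar M₀ Γ) (Λs.mulVec x₀) < gaugeFn (SStar M₀ Γ) x₀ := by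
  have hy : Λs.mulVec x₀ ≠ 0 := by
    intro h
    apply hx₀
    have hi : Function.Injective Λs.mulVec :=
      Matrix.mulVec_injective_of_isUnit ((Matrix.isUnit_iff_isUnit_det _).2 (hinv _ hΛs))
    apply hi
    rw [h, Matrix.mulVec_zero]
  set y := Λs.mulVec x₀ with hydef
  have hq : 0 < quadForm M₀ y := by
    have := hM₀.dotProduct_mulVec_pos hy
    simpa [quadForm] using this
  obtain ⟨r, hr, hrq⟩ : ∃ r : ℝ, 0 < r ∧ r ^ 2 = quadForm M₀ y :=
    ⟨Real.sqrt (quadForm M₀ y), Real.sqrt_pos.2 hq, Real.sq_sqrt hq.le⟩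
  have hqs : quadForm (Λsᵀ * M₀ * Λs) x₀ = r ^ 2 := by
    rw [quadForm_conj_aux, hrq]
  have h1 : r ≤ gaugeFn (SStar M₀ Γ) x₀ := by
    apply le_csInf
    · refine ⟨r, hr.le, r⁻¹ • x₀, ?_, ?_⟩
      · refine Set.mem_biUnion hΛs ?_
        change quadForm _ _ ≤ 1
        rw [quadForm_smul_aux, hqs, ← mul_pow, inv_mul_cancel₀ hr.ne', one_pow]
      · exact smul_inv_smul₀ hr.ne' x₀
    · rintro α ⟨hα, z, hz, hzx⟩
      obtain ⟨Λ, hΛ, hzΛ⟩ := Set.mem_iUnion₂.1 hz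
      have hm := hmin Λ hΛ
      have hzx' : α • z = x₀ := hzx
      have hz1 : quadForm (Λᵀ * M₀ * Λ) z ≤ 1 := hzΛ
      rw [hqs, ← hzx', quadForm_smul_aux] at hm
      have : r ^ 2 ≤ α ^ 2 := by nlinarith [sq_nonneg α]
      exact (pow_le_pow_iff_left₀ hr.le hα two_ne_zero).1 this
  have h2 : r⁻¹ • y ∈ interior (SStar M₀ Γ) := by
    apply hadm
    change quadForm _ _ ≤ 1
    rw [quadForm_smul_aux, ← hrq, ← mul_pow, inv_mul_cancel₀ hr.ne', one_pow]
  have h3 : ∀ᶠ t : ℝ in 𝓝 1, t • (r⁻¹ • y) ∈ interior (SStar M₀ Γ) := by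
    have hc : Continuous fun t : ℝ => t • (r⁻¹ • y) := by fun_prop
    apply hc.continuousAt.eventually_mem
    apply isOpen_interior.mem_nhds
    simpa using h2
  obtain ⟨c, hcS, hc⟩ : ∃ c : ℝ, c • (r⁻¹ • y) ∈ interior (SStar M₀ Γ) ∧ 1 < c :=
    ((h3.filter_mono nhdsWithin_le_nhds).and (self_mem_nhdsWithin (s := Set.Ioi (1 : ℝ)))).exists
  have hc0 : 0 < c := by linarith
  have h4 : gaugeFn (SStar M₀ Γ) y ≤ r / c := by
    apply csInf_le ⟨0, fun a ha => ha.1⟩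
    refine ⟨by positivity, _, interior_subset hcS, ?_⟩
    change (r / c) • (c • (r⁻¹ • y)) = y
    rw [smul_smul, smul_smul]
    have : r / c * (c * r⁻¹) = 1 := by field_simp
    rw [show r / c * c * r⁻¹ = 1 by field_simp, one_smul]
  exact lt_of_le_of_lt h4 (lt_of_lt_of_le (div_lt_self hr hc) h1)
end
end
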